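/- arXiv:1309.4542 — 4 statements merged into one kernel-verified Lean document; each statement's English description precedes it below -/
import Mathlib

section
/- There exists a constant C > 0 such that for every n ≥ 1 and every set P of n points in the plane ℝ², the number of ordered pairs (p, q) of points of P with p₁ < q₁, p₂ < q₂, and (q₁ − p₁)(q₂ − p₂) = 1 is at most C·n^(4/3). -/
/-!
In the coordinates `s = x - y`, `t = x + y`, the points spanning a unit-area rectangle with a fixed
bottom-left corner form a translate of the graph of `√(s ^ 2 + 4)`. Since this function is strictly
convex, its translates are pseudolines, and the pairs to be counted are incidences between `n`
pseudolines and `n` points.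

Incidences are bounded by Székely's argument for the Szemerédi–Trotter theorem. Joining consecutive
points on each curve gives a drawing of a graph in which two curves contribute at most one crossing.
A drawing without crossings has at most three edges per vertex: sweep the wedge between two
consecutive edges leaving a vertex until a first vertex is met, and charge the upper edge to it;
planarity lets a vertex be charged at most once according to whether it lies strictly below the
upper edge or on it. The lowest edge leaving each vertex is charged to its source. Keeping each
point with a suitable probability amplifies this to the incidence bound.
-/

namespace Pseudoline

open Finset

section SingleCrossing

variable {ι α β : Type*} [LinearOrder α] [LinearOrder β] {γ : ι → α → β} {g h : α → β} {x y z : α}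

/-- The graph of `h` overtakes that of `g`: once `h` has caught up with `g`, it stays strictly above
`g` from there on. -/
def Overtakes (h g : α → β) : Prop := ∀ ⦃x y⦄, x < y → g x ≤ h x → g y < h y

lemma Overtakes.lt_of_lt (H : Overtakes h g) (hxy : x ≤ y) (hx : g x < h x) : g y < h y := by
  rcases hxy.eq_or_lt with rfl | hxy
  exacts [hx, H hxy hx.le]

/-- An abstract family of pseudolines, given as graphs of functions: any two members meet at most
once, and they swap sides when they meet. -/
def IsPseudolineFamily (γ : ι → α → β) : Prop :=
  Pairwise fun i j ↦ Overtakes (γ i) (γ j) ∨ Overtakes (γ j) (γ i)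

lemma IsPseudolineFamily.not_swap_right (hγ : IsPseudolineFamily γ) {i j : ι}
    (hz : γ i z = γ j z) (hzx : z ≤ x) (hzy : z ≤ y) (hx : γ i x < γ j x) : ¬γ j y < γ i y := by
  intro hy
  have hij : i ≠ j := by rintro rfl; exact hx.false
  rcases hγ hij with H | H
  · rcases hzx.eq_or_lt with rfl | hzx
    exacts [hx.ne hz, hx.not_gt (H hzx hz.ge)]
  · rcases hzy.eq_or_lt with rfl | hzy
    exacts [hy.ne' hz, hy.not_gt (H hzy hz.le)]

lemma IsPseudolineFamily.not_swap_left (hγ : IsPseudolineFamily γ) {i j : ι}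
    (hz : γ i z = γ j z) (hxz : x ≤ z) (hyz : y ≤ z) (hx : γ i x < γ j x) : ¬γ j y < γ i y := by
  intro hy
  have hij : i ≠ j := by rintro rfl; exact hx.false
  rcases hγ hij with H | H
  · exact (H.lt_of_lt hyz hy).ne' hz
  · exact (H.lt_of_lt hxz hx).ne hz

end SingleCrossing

/-- The arc of the curve with index `curve` over the interval from `left` to `right`. -/
@[ext]
structure Arc (ι α : Type*) where
  curve : ι
  left : α
  right : α

section Arcs

variable {ι α β : Type*} (γ : ι → α → β)

/-- The left endpoint of an arc, as a point of the plane. -/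
def Arc.source (e : Arc ι α) : α × β := (e.left, γ e.curve e.left)

/-- The right endpoint of an arc, as a point of the plane. -/
def Arc.target (e : Arc ι α) : α × β := (e.right, γ e.curve e.right)

variable [LinearOrder α] [LinearOrder β]

/-- The set of the two endpoints of an arc. -/
def Arc.ends (e : Arc ι α) : Finset (α × β) := {e.source γ, e.target γ}

/-- Two arcs cross: over the interval they have in common, their vertical order is not constant. -/
def Arc.Crosses (e f : Arc ι α) : Prop :=
  ∃ x ∈ Set.Icc e.left e.right ∩ Set.Icc f.left f.right,
    ∃ y ∈ Set.Icc e.left e.right ∩ Set.Icc f.left f.right,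
      γ e.curve x < γ f.curve x ∧ γ f.curve y < γ e.curve y

/-- The arc `e` leaves the common source of `e` and `f` below `f`. -/
structure Arc.Below (e f : Arc ι α) : Prop where
  source_eq : e.source γ = f.source γ
  lt : ∀ ⦃x⦄, f.left < x → γ e.curve x < γ f.curve x

variable {γ} {e f g : Arc ι α} {z : α}

lemma Arc.ends_subset {S : Finset (α × β)} :
    e.ends γ ⊆ S ↔ e.source γ ∈ S ∧ e.target γ ∈ S := by
  simp [Arc.ends, insert_subset_iff]

lemma Arc.card_ends (he : e.left < e.right) : #(e.ends γ) = 2 :=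
  card_pair fun h ↦ he.ne (congrArg Prod.fst h)

lemma Arc.Crosses.symm (h : e.Crosses γ f) : f.Crosses γ e := by
  obtain ⟨x, hx, y, hy, hlt, hgt⟩ := h
  exact ⟨y, hy.symm, x, hx.symm, hgt, hlt⟩

lemma Arc.Crosses.mem_Ioo (h : e.Crosses γ f) (hγ : IsPseudolineFamily γ)
    (hz : γ e.curve z = γ f.curve z) : z ∈ Set.Ioo e.left e.right := by
  obtain ⟨x, ⟨⟨hex, hxe⟩, -⟩, y, ⟨⟨hey, hye⟩, -⟩, hlt, hgt⟩ := h
  by_contra hmem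
  rcases le_or_gt z e.left with hle | hlt'
  · exact hγ.not_swap_right hz (hle.trans hex) (hle.trans hey) hlt hgt
  · have hle : e.right ≤ z := not_lt.1 fun hr ↦ hmem ⟨hlt', hr⟩
    exact hγ.not_swap_left hz (hxe.trans hle) (hye.trans hle) hlt hgt

lemma Arc.Crosses.disjoint_ends (h : e.Crosses γ f) (hγ : IsPseudolineFamily γ) :
    Disjoint (e.ends γ) (f.ends γ) := by
  have on_curve : ∀ {a : Arc ι α} {p : α × β}, p ∈ a.ends γ →
      (p.1 = a.left ∨ p.1 = a.right) ∧ p.2 = γ a.curve p.1 := by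
    simp +contextual [Arc.ends, Arc.source, Arc.target]
  refine disjoint_left.2 fun p hpe hpf ↦ ?_
  obtain ⟨hend, hp⟩ := on_curve hpe
  obtain ⟨hleft, hright⟩ := h.mem_Ioo hγ (hp.symm.trans (on_curve hpf).2)
  exact hend.elim hleft.ne' hright.ne

lemma Arc.below_or_below (hγ : IsPseudolineFamily γ) (hsource : e.source γ = f.source γ)
    (hne : e.curve ≠ f.curve) : e.Below γ f ∨ f.Below γ e := by
  obtain ⟨hleft, hheight⟩ := Prod.ext_iff.1 hsource
  simp only [Arc.source] at hleft hheight
  rw [hleft] at hheight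
  rcases hγ hne with H | H
  · exact .inr ⟨hsource.symm, fun x hx ↦ H (hleft ▸ hx) hheight.ge⟩
  · exact .inl ⟨hsource, fun x hx ↦ H hx hheight.le⟩

end Arcs

section PlanarDrawing

variable {ι α β : Type*} [LinearOrder α] [LinearOrder β] (γ : ι → α → β)
  (S : Finset (α × β)) (F : Finset (Arc ι α))

/-- A plane graph drawn with arcs of the family `γ`: the vertices are `S`, the edges are `F`. -/
structure IsPlaneDrawing : Prop where
  left_lt_right : ∀ e ∈ F, e.left < e.right
  source_mem : ∀ e ∈ F, e.source γ ∈ S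
  target_mem : ∀ e ∈ F, e.target γ ∈ S
  eq_of_source_eq : ∀ e ∈ F, ∀ f ∈ F, e.curve = f.curve → e.source γ = f.source γ → e = f
  not_crosses : ∀ e ∈ F, ∀ f ∈ F, ¬e.Crosses γ f

/-- The point `p` lies between the arcs `e` (below) and `f` (above), strictly to the right of the
left end of `f`. -/
structure IsBetween (e f : Arc ι α) (p : α × β) : Prop where
  left_lt : f.left < p.1
  le_right_lower : p.1 ≤ e.right
  le_right_upper : p.1 ≤ f.right
  lower_le : γ e.curve p.1 ≤ p.2
  le_upper : p.2 ≤ γ f.curve p.1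

/-- The arcs `e` and `f` of `F` leave a common source, `e` directly below `f`, and `w` is a first
vertex of `S` met when sweeping the region between them from left to right. -/
structure IsWedge (e f : Arc ι α) (w : α × β) : Prop where
  lower_mem : e ∈ F
  upper_mem : f ∈ F
  below : e.Below γ f
  consecutive : ∀ g ∈ F, g.Below γ f → ¬e.Below γ g
  vertex_mem : w ∈ S
  isBetween : IsBetween γ e f w
  first : ∀ z ∈ S, IsBetween γ e f z → w.1 ≤ z.1

variable {γ S F} {e f e' f' : Arc ι α} {w : α × β}

lemma IsWedge.lower_lt_upper (h : IsWedge γ S F e f w) (h' : IsWedge γ S F e' f' w)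
    (hw : w.2 < γ f.curve w.1 ↔ w.2 < γ f'.curve w.1) : γ e.curve w.1 < γ f'.curve w.1 := by
  by_cases hlt : w.2 < γ f.curve w.1
  · exact h.isBetween.lower_le.trans_lt (hw.1 hlt)
  · calc γ e.curve w.1 < γ f.curve w.1 := h.below.lt h.isBetween.left_lt
      _ ≤ w.2 := not_lt.1 hlt
      _ ≤ γ f'.curve w.1 := h'.isBetween.le_upper

lemma IsWedge.left_eq (h : IsWedge γ S F e f w) : e.left = f.left :=
  congrArg Prod.fst h.below.source_eq

lemma IsWedge.height_left_eq (h : IsWedge γ S F e f w) :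
    γ e.curve f.left = γ f.curve f.left := by
  simpa only [Arc.source, h.left_eq] using congrArg Prod.snd h.below.source_eq

lemma IsWedge.lt_or_lt_of_mem (h : IsWedge γ S F e f w) {u : α × β} (hu : u ∈ S)
    (hne : u ≠ f.source γ) (hle : f.left ≤ u.1) (hlt : u.1 < w.1) :
    u.2 < γ e.curve u.1 ∨ γ f.curve u.1 < u.2 := by
  rcases hle.eq_or_lt with heq | hleft
  · rw [← heq, h.height_left_eq]
    exact lt_or_gt_of_ne fun hheight ↦ hne (Prod.ext heq.symm hheight)
  · by_contra! hcon
    exact hlt.not_ge (h.first u hu ⟨hleft, hlt.le.trans h.isBetween.le_right_lower,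
      hlt.le.trans h.isBetween.le_right_upper, hcon.1, hcon.2⟩)

lemma IsWedge.source_eq_of_left_le (hD : IsPlaneDrawing γ S F) (h : IsWedge γ S F e f w)
    (h' : IsWedge γ S F e' f' w) (hw : w.2 < γ f.curve w.1 ↔ w.2 < γ f'.curve w.1)
    (hle : f.left ≤ f'.left) : f.source γ = f'.source γ := by
  by_contra hne
  have hlt : f'.left < w.1 := h'.isBetween.left_lt
  have Icc_of_wedge : ∀ {a b : Arc ι α}, IsWedge γ S F a b w → b.left ≤ f'.left →
      (f'.left ∈ Set.Icc a.left a.right ∧ w.1 ∈ Set.Icc a.left a.right) ∧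
      f'.left ∈ Set.Icc b.left b.right ∧ w.1 ∈ Set.Icc b.left b.right := by
    intro a b hab hb
    have hr := hab.isBetween.le_right_lower
    have hr' := hab.isBetween.le_right_upper
    rw [hab.left_eq]
    exact ⟨⟨⟨hb, hlt.le.trans hr⟩, hb.trans hlt.le, hr⟩,
      ⟨hb, hlt.le.trans hr'⟩, hb.trans hlt.le, hr'⟩
  obtain ⟨⟨hu_e, hw_e⟩, hu_f, hw_f⟩ := Icc_of_wedge h hle
  obtain ⟨⟨hu_e', hw_e'⟩, hu_f', hw_f'⟩ := Icc_of_wedge h' le_rfl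
  have hu : f'.source γ ∈ S := hD.source_mem f' h'.upper_mem
  rcases h.lt_or_lt_of_mem hu (Ne.symm hne) hle hlt with hbelow | habove
  · exact hD.not_crosses f' h'.upper_mem e h.lower_mem
      ⟨f'.left, ⟨hu_f', hu_e⟩, w.1, ⟨hw_f', hw_e⟩, hbelow, h.lower_lt_upper h' hw⟩
  · exact hD.not_crosses f h.upper_mem e' h'.lower_mem
      ⟨f'.left, ⟨hu_f, hu_e'⟩, w.1, ⟨hw_f, hw_e'⟩, h'.height_left_eq ▸ habove,
        h'.lower_lt_upper h hw.symm⟩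

lemma IsWedge.not_below (hγ : IsPseudolineFamily γ) (h : IsWedge γ S F e f w)
    (h' : IsWedge γ S F e' f' w) (hw : w.2 < γ f.curve w.1 ↔ w.2 < γ f'.curve w.1) :
    ¬f.Below γ f' := by
  intro hff'
  have hlt : γ e'.curve w.1 < γ f.curve w.1 := h'.lower_lt_upper h hw.symm
  rcases Arc.below_or_below hγ (h'.below.source_eq.trans hff'.source_eq.symm)
    (fun hcurve ↦ hlt.ne (by rw [hcurve])) with hbelow | hbelow
  · exact h'.consecutive f h.upper_mem hff' hbelow
  · exact hlt.not_gt (hbelow.lt (h'.left_eq ▸ h'.isBetween.left_lt))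

lemma IsWedge.upper_unique (hγ : IsPseudolineFamily γ) (hD : IsPlaneDrawing γ S F)
    (h : IsWedge γ S F e f w) (h' : IsWedge γ S F e' f' w)
    (hw : w.2 < γ f.curve w.1 ↔ w.2 < γ f'.curve w.1) : f = f' := by
  have hsource : f.source γ = f'.source γ := by
    rcases le_total f.left f'.left with hle | hle
    · exact h.source_eq_of_left_le hD h' hw hle
    · exact (h'.source_eq_of_left_le hD h hw.symm hle).symm
  by_contra hne
  rcases Arc.below_or_below hγ hsource fun hcurve ↦
    hne (hD.eq_of_source_eq f h.upper_mem f' h'.upper_mem hcurve hsource) with hbelow | hbelow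
  · exact h.not_below hγ h' hw hbelow
  · exact h'.not_below hγ h hw.symm hbelow

lemma IsPlaneDrawing.exists_isBetween (hD : IsPlaneDrawing γ S F) (he : e ∈ F) (hf : f ∈ F)
    (hef : e.Below γ f) : ∃ w ∈ S, IsBetween γ e f w := by
  have hleft : e.left = f.left := congrArg Prod.fst hef.source_eq
  have hlt_e : f.left < e.right := hleft ▸ hD.left_lt_right e he
  have hlt_f : f.left < f.right := hD.left_lt_right f hf
  rcases le_total e.right f.right with hle | hle
  · exact ⟨e.target γ, hD.target_mem e he, hlt_e, le_rfl, hle, le_rfl, (hef.lt hlt_e).le⟩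
  · exact ⟨f.target γ, hD.target_mem f hf, hlt_f, hle, le_rfl, (hef.lt hlt_f).le, le_rfl⟩

lemma IsPlaneDrawing.exists_consecutive (hD : IsPlaneDrawing γ S F) (hf : f ∈ F)
    (h : ∃ e ∈ F, e.Below γ f) :
    ∃ e ∈ F, e.Below γ f ∧ ∀ g ∈ F, g.Below γ f → ¬e.Below γ g := by
  classical
  obtain ⟨e₀, he₀, hbelow₀⟩ := h
  obtain ⟨e, he, hmax⟩ := exists_max_image {e ∈ F | e.Below γ f} (fun e ↦ γ e.curve f.right)
    ⟨e₀, mem_filter.2 ⟨he₀, hbelow₀⟩⟩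
  obtain ⟨heF, hef⟩ := mem_filter.1 he
  refine ⟨e, heF, hef, fun g hg hgf heg ↦ (hmax g (mem_filter.2 ⟨hg, hgf⟩)).not_gt (heg.lt ?_)⟩
  exact (congrArg Prod.fst hgf.source_eq).trans_lt (hD.left_lt_right f hf)

lemma IsPlaneDrawing.exists_isWedge (hD : IsPlaneDrawing γ S F) (hf : f ∈ F)
    (h : ∃ e ∈ F, e.Below γ f) : ∃ e w, IsWedge γ S F e f w := by
  classical
  obtain ⟨e, he, hef, hcons⟩ := hD.exists_consecutive hf h
  obtain ⟨w₀, hw₀S, hw₀⟩ := hD.exists_isBetween he hf hef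
  obtain ⟨w, hw, hmin⟩ := exists_min_image {w ∈ S | IsBetween γ e f w} Prod.fst
    ⟨w₀, mem_filter.2 ⟨hw₀S, hw₀⟩⟩
  obtain ⟨hwS, hbetween⟩ := mem_filter.1 hw
  exact ⟨e, w, he, hf, hef, hcons, hwS, hbetween, fun z hzS hz ↦ hmin z (mem_filter.2 ⟨hzS, hz⟩)⟩

open scoped Classical in
lemma IsPlaneDrawing.card_lowest_le (hγ : IsPseudolineFamily γ) (hD : IsPlaneDrawing γ S F) :
    #{f ∈ F | ∀ e ∈ F, ¬e.Below γ f} ≤ #S := by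
  refine card_le_card_of_injOn (Arc.source γ)
    (fun f hf ↦ hD.source_mem f (mem_filter.1 hf).1) fun e he f hf hsource ↦ ?_
  obtain ⟨heF, he⟩ := mem_filter.1 he
  obtain ⟨hfF, hf⟩ := mem_filter.1 hf
  by_contra hne
  rcases Arc.below_or_below hγ hsource
    fun hcurve ↦ hne (hD.eq_of_source_eq e heF f hfF hcurve hsource) with hbelow | hbelow
  exacts [hf e heF hbelow, he f hfF hbelow]

open scoped Classical in
lemma IsPlaneDrawing.card_isWedge_le (hγ : IsPseudolineFamily γ) (hD : IsPlaneDrawing γ S F)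
    (q : Prop) :
    #{f ∈ F | ∃ e w, IsWedge γ S F e f w ∧ (w.2 < γ f.curve w.1 ↔ q)} ≤ #S := by
  refine card_le_card_of_forall_subsingleton
    (fun f w ↦ ∃ e, IsWedge γ S F e f w ∧ (w.2 < γ f.curve w.1 ↔ q)) (fun f hf ↦ ?_) fun w _ ↦ ?_
  · obtain ⟨-, e, w, h, hq⟩ := mem_filter.1 hf
    exact ⟨w, h.vertex_mem, e, h, hq⟩
  · rintro f ⟨-, e, h, hq⟩ f' ⟨-, e', h', hq'⟩
    exact h.upper_unique hγ hD h' (hq.trans hq'.symm)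

theorem IsPlaneDrawing.card_le (hγ : IsPseudolineFamily γ) (hD : IsPlaneDrawing γ S F) :
    #F ≤ 3 * #S := by
  classical
  let wedges (q : Prop) : Finset (Arc ι α) :=
    {f ∈ F | ∃ e w, IsWedge γ S F e f w ∧ (w.2 < γ f.curve w.1 ↔ q)}
  have hcover : F ⊆ {f ∈ F | ∀ e ∈ F, ¬e.Below γ f} ∪ (wedges True ∪ wedges False) := by
    intro f hf
    by_cases hlow : ∀ e ∈ F, ¬e.Below γ f
    · exact mem_union_left _ (mem_filter.2 ⟨hf, hlow⟩)
    push Not at hlow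
    obtain ⟨e, w, h⟩ := hD.exists_isWedge hf hlow
    refine mem_union_right _ (mem_union.2 ?_)
    by_cases hw : w.2 < γ f.curve w.1
    · exact .inl (mem_filter.2 ⟨hf, e, w, h, iff_true_intro hw⟩)
    · exact .inr (mem_filter.2 ⟨hf, e, w, h, iff_false_intro hw⟩)
  calc #F ≤ #{f ∈ F | ∀ e ∈ F, ¬e.Below γ f} + (#(wedges True) + #(wedges False)) :=
        (card_le_card hcover).trans <|
          (card_union_le _ _).trans (Nat.add_le_add_left (card_union_le _ _) _)
    _ ≤ #S + (#S + #S) := by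
        gcongr
        exacts [hD.card_lowest_le hγ, hD.card_isWedge_le hγ True, hD.card_isWedge_le hγ False]
    _ = 3 * #S := by ring

end PlanarDrawing

section Sampling

variable {R α β : Type*} [CommSemiring R] [DecidableEq α] {a b : R}

lemma sum_powerset_pow_mul_pow_mul_ite (hab : a + b = 1) {P T : Finset α} (hT : T ⊆ P) :
    ∑ S ∈ P.powerset, a ^ #S * b ^ #(P \ S) * (if T ⊆ S then 1 else 0) = a ^ #T := by
  have hprod : ∏ i ∈ P, (a + if i ∈ T then 0 else b) = a ^ #T := by
    have hfactor : ∀ i, (a + if i ∈ T then 0 else b) = if i ∈ T then a else 1 := by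
      intro i
      split_ifs
      exacts [add_zero a, hab]
    simp only [hfactor, prod_ite_mem, inter_eq_right.2 hT, prod_const]
  rw [← hprod, prod_add]
  refine sum_congr rfl fun S _ ↦ ?_
  rw [prod_const, mul_assoc]
  congr 1
  split_ifs with hTS
  · rw [mul_one, ← prod_const]
    exact prod_congr rfl fun i hi ↦ (if_neg fun hiT ↦ (mem_sdiff.1 hi).2 (hTS hiT)).symm
  · obtain ⟨i, hiT, hiS⟩ := not_subset.1 hTS
    rw [mul_zero, eq_comm]
    exact prod_eq_zero (mem_sdiff.2 ⟨hT hiT, hiS⟩) (if_pos hiT)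

/-- When every point of `P` is kept independently with probability `a`, the expected number of
`k`-sets of a family that survive is `a ^ k` times the size of the family. -/
lemma sum_powerset_pow_mul_pow_mul_card_filter (hab : a + b = 1) {P : Finset α} {X : Finset β}
    {T : β → Finset α} (hT : ∀ x ∈ X, T x ⊆ P) {k : ℕ} (hk : ∀ x ∈ X, #(T x) = k) :
    ∑ S ∈ P.powerset, a ^ #S * b ^ #(P \ S) * (#{x ∈ X | T x ⊆ S} : R) = a ^ k * #X := by
  calc ∑ S ∈ P.powerset, a ^ #S * b ^ #(P \ S) * (#{x ∈ X | T x ⊆ S} : R)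
      = ∑ x ∈ X, ∑ S ∈ P.powerset, a ^ #S * b ^ #(P \ S) * (if T x ⊆ S then 1 else 0) := by
        simp only [← sum_boole, mul_sum]
        exact sum_comm
    _ = ∑ _ ∈ X, a ^ k :=
        sum_congr rfl fun x hx ↦ by rw [sum_powerset_pow_mul_pow_mul_ite hab (hT x hx), hk x hx]
    _ = a ^ k * #X := by rw [sum_const, nsmul_eq_mul, mul_comm]

lemma sum_powerset_pow_mul_pow_mul_card (hab : a + b = 1) (P : Finset α) :
    ∑ S ∈ P.powerset, a ^ #S * b ^ #(P \ S) * (#S : R) = a * #P := by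
  have h := sum_powerset_pow_mul_pow_mul_card_filter (P := P) (X := P) (T := fun x ↦ {x}) hab
    (fun _ hx ↦ singleton_subset_iff.2 hx) (k := 1) fun x _ ↦ card_singleton x
  rw [pow_one] at h
  rw [← h]
  refine sum_congr rfl fun S hS ↦ ?_
  simp only [singleton_subset_iff, filter_mem_eq_inter, inter_eq_right.2 (mem_powerset.1 hS)]

end Sampling

section IncidenceGraph

variable {ι α β : Type*} (γ : ι → α → β) (L : Finset ι) (P : Finset (α × β))

open scoped Classical in
/-- The pairs of a curve with index in `L` and a point of `P` lying on it. -/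
noncomputable def incidences : Finset (ι × α × β) := {q ∈ L ×ˢ P | γ q.1 q.2.1 = q.2.2}

variable {γ L P} in
lemma mem_incidences {q : ι × α × β} :
    q ∈ incidences γ L P ↔ (q.1 ∈ L ∧ q.2 ∈ P) ∧ γ q.1 q.2.1 = q.2.2 := by
  classical
  rw [incidences, mem_filter, mem_product]

variable [LinearOrder α]

/-- The arc `e` is an edge of Székely's graph of the curves `L` and the points `P`: it joins two
consecutive points of `P` on a curve of `L`. -/
structure IsEdge (e : Arc ι α) : Prop where
  curve_mem : e.curve ∈ L
  source_mem : e.source γ ∈ P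
  target_mem : e.target γ ∈ P
  left_lt_right : e.left < e.right
  notMem_of_mem_Ioo : ∀ x ∈ Set.Ioo e.left e.right, (x, γ e.curve x) ∉ P

open scoped Classical in
/-- The finite set of edges of Székely's graph. -/
noncomputable def edges : Finset (Arc ι α) :=
  {e ∈ (L ×ˢ P ×ˢ P).image fun t ↦ ⟨t.1, t.2.1.1, t.2.2.1⟩ | IsEdge γ L P e}

variable {γ L P} in
lemma mem_edges {e : Arc ι α} : e ∈ edges γ L P ↔ IsEdge γ L P e := by
  classical
  rw [edges, mem_filter, and_iff_right_of_imp fun h ↦ ?_]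
  exact mem_image.2 ⟨(e.curve, e.source γ, e.target γ),
    mem_product.2 ⟨h.curve_mem, mem_product.2 ⟨h.source_mem, h.target_mem⟩⟩, rfl⟩

variable {γ L P} in
lemma IsEdge.eq_or_right_le_left {e f : Arc ι α} (he : IsEdge γ L P e) (hf : IsEdge γ L P f)
    (hcurve : e.curve = f.curve) : e = f ∨ e.right ≤ f.left ∨ f.right ≤ e.left := by
  by_contra! hcon
  obtain ⟨hne, hfe, hef⟩ := hcon
  have hleft_f : ¬e.left < f.left := fun h ↦
    he.notMem_of_mem_Ioo f.left ⟨h, hfe⟩ (hcurve ▸ hf.source_mem)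
  have hleft_e : ¬f.left < e.left := fun h ↦
    hf.notMem_of_mem_Ioo e.left ⟨h, hef⟩ (hcurve ▸ he.source_mem)
  have hright_f : ¬f.right < e.right := fun h ↦
    he.notMem_of_mem_Ioo f.right ⟨hef, h⟩ (hcurve ▸ hf.target_mem)
  have hright_e : ¬e.right < f.right := fun h ↦
    hf.notMem_of_mem_Ioo e.right ⟨hfe, h⟩ (hcurve ▸ he.target_mem)
  exact hne (Arc.ext hcurve (le_antisymm (not_lt.1 hleft_e) (not_lt.1 hleft_f))
    (le_antisymm (not_lt.1 hright_f) (not_lt.1 hright_e)))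

variable {γ L P} in
lemma IsEdge.eq_of_source_eq {e f : Arc ι α} (he : IsEdge γ L P e) (hf : IsEdge γ L P f)
    (hcurve : e.curve = f.curve) (hsource : e.source γ = f.source γ) : e = f := by
  have hleft : e.left = f.left := congrArg Prod.fst hsource
  rcases he.eq_or_right_le_left hf hcurve with h | h | h
  · exact h
  · exact absurd (hleft ▸ he.left_lt_right) h.not_gt
  · exact absurd (hleft ▸ hf.left_lt_right) h.not_gt

variable [LinearOrder β]

open scoped Classical in
/-- The ordered pairs of crossing edges of Székely's graph. -/
noncomputable def crossings : Finset (Arc ι α × Arc ι α) :=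
  {x ∈ edges γ L P ×ˢ edges γ L P | x.1.Crosses γ x.2}

variable {γ L P} {e f e' f' : Arc ι α}

lemma mem_crossings {x : Arc ι α × Arc ι α} :
    x ∈ crossings γ L P ↔ (IsEdge γ L P x.1 ∧ IsEdge γ L P x.2) ∧ x.1.Crosses γ x.2 := by
  classical
  rw [crossings, mem_filter, mem_product, mem_edges, mem_edges]

lemma IsEdge.ends_subset (he : IsEdge γ L P e) : e.ends γ ⊆ P :=
  Arc.ends_subset.2 ⟨he.source_mem, he.target_mem⟩

lemma not_crosses_of_right_le_left (hγ : IsPseudolineFamily γ) (he : e.curve = e'.curve)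
    (hf : f.curve = f'.curve) (h : e.Crosses γ f) (hle : e.right ≤ e'.left) :
    ¬e'.Crosses γ f' := by
  obtain ⟨x, ⟨⟨-, hx⟩, -⟩, y, ⟨⟨-, hy⟩, -⟩, hxlt, hylt⟩ := h
  rintro ⟨x', ⟨⟨hx', -⟩, -⟩, y', ⟨⟨hy', -⟩, -⟩, hxlt', hylt'⟩
  rw [← he, ← hf] at hxlt' hylt'
  have hne : e.curve ≠ f.curve := fun hcurve ↦ hxlt.ne (by rw [hcurve])
  rcases hγ hne with H | H
  · exact hxlt'.not_gt (H.lt_of_lt (hy.trans (hle.trans hx')) hylt)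
  · exact hylt'.not_gt (H.lt_of_lt (hx.trans (hle.trans hy')) hxlt)

lemma IsEdge.eq_of_crosses (hγ : IsPseudolineFamily γ) (he : IsEdge γ L P e)
    (he' : IsEdge γ L P e') (hcurve : e.curve = e'.curve) (hcurve' : f.curve = f'.curve)
    (h : e.Crosses γ f) (h' : e'.Crosses γ f') : e = e' := by
  rcases he.eq_or_right_le_left he' hcurve with heq | hle | hle
  · exact heq
  · exact absurd h' (not_crosses_of_right_le_left hγ hcurve hcurve' h hle)
  · exact absurd h (not_crosses_of_right_le_left hγ hcurve.symm hcurve'.symm h' hle)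

lemma card_crossings_le (hγ : IsPseudolineFamily γ) : #(crossings γ L P) ≤ #L ^ 2 := by
  rw [sq, ← card_product]
  refine card_le_card_of_injOn (fun x ↦ (x.1.curve, x.2.curve)) (fun x hx ↦ ?_)
    fun x hx y hy hxy ↦ ?_
  · obtain ⟨⟨hx₁, hx₂⟩, -⟩ := mem_crossings.1 hx
    exact mem_product.2 ⟨hx₁.curve_mem, hx₂.curve_mem⟩
  · obtain ⟨⟨hx₁, hx₂⟩, hx⟩ := mem_crossings.1 hx
    obtain ⟨⟨hy₁, hy₂⟩, hy⟩ := mem_crossings.1 hy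
    obtain ⟨h₁, h₂⟩ := Prod.mk.inj hxy
    exact Prod.ext (hx₁.eq_of_crosses hγ hy₁ h₁ h₂ hx hy)
      (hx₂.eq_of_crosses hγ hy₂ h₂ h₁ hx.symm hy.symm)

lemma exists_isEdge_of_lt {i : ι} (hi : i ∈ L) {u v : α × β} (hu : u ∈ P) (hv : v ∈ P)
    (hiu : γ i u.1 = u.2) (hiv : γ i v.1 = v.2) (huv : u.1 < v.1) :
    ∃ e, IsEdge γ L P e ∧ e.curve = i ∧ e.source γ = u := by
  classical
  obtain ⟨t, ht, hmin⟩ := exists_min_image {z ∈ P | γ i z.1 = z.2 ∧ u.1 < z.1} Prod.fst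
    ⟨v, mem_filter.2 ⟨hv, hiv, huv⟩⟩
  obtain ⟨htP, hit, hut⟩ := mem_filter.1 ht
  have hsource : (u.1, γ i u.1) = u := Prod.ext rfl hiu
  have htarget : (t.1, γ i t.1) = t := Prod.ext rfl hit
  refine ⟨⟨i, u.1, t.1⟩, ⟨hi, hsource.symm ▸ hu, htarget.symm ▸ htP, hut, ?_⟩, rfl, hsource⟩
  exact fun x hx hxP ↦ hx.2.not_ge (hmin (x, γ i x) (mem_filter.2 ⟨hxP, rfl, hx.1⟩))

lemma card_incidences_le : #(incidences γ L P) ≤ #(edges γ L P) + #L := by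
  classical
  let last : Finset (ι × α × β) :=
    {q ∈ incidences γ L P | ∀ z ∈ P, γ q.1 z.1 = z.2 → z.1 ≤ q.2.1}
  have hlast : #last ≤ #L := by
    refine card_le_card_of_injOn Prod.fst
      (fun q hq ↦ (mem_incidences.1 (mem_filter.1 hq).1).1.1) fun q hq r hr hqr ↦ ?_
    obtain ⟨hq, hqmax⟩ := mem_filter.1 hq
    obtain ⟨hr, hrmax⟩ := mem_filter.1 hr
    obtain ⟨⟨-, hqP⟩, hqγ⟩ := mem_incidences.1 hq
    obtain ⟨⟨-, hrP⟩, hrγ⟩ := mem_incidences.1 hr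
    have hx : q.2.1 = r.2.1 :=
      le_antisymm (hrmax _ hqP (hqr ▸ hqγ)) (hqmax _ hrP (hqr ▸ hrγ))
    exact Prod.ext hqr (Prod.ext hx (by rw [← hqγ, ← hrγ, hqr, hx]))
  have hcover : incidences γ L P ⊆ (edges γ L P).image (fun e ↦ (e.curve, e.source γ)) ∪ last := by
    intro q hq
    obtain ⟨⟨hqL, hqP⟩, hqγ⟩ := mem_incidences.1 hq
    by_cases hmax : ∀ z ∈ P, γ q.1 z.1 = z.2 → z.1 ≤ q.2.1
    · exact mem_union_right _ (mem_filter.2 ⟨hq, hmax⟩)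
    push Not at hmax
    obtain ⟨z, hzP, hzγ, hlt⟩ := hmax
    obtain ⟨e, he, hcurve, hsource⟩ := exists_isEdge_of_lt hqL hqP hzP hqγ hzγ hlt
    exact mem_union_left _ (mem_image.2 ⟨e, mem_edges.2 he, Prod.ext hcurve hsource⟩)
  calc #(incidences γ L P) ≤ #((edges γ L P).image fun e ↦ (e.curve, e.source γ)) + #last :=
        (card_le_card hcover).trans (card_union_le _ _)
    _ ≤ #(edges γ L P) + #L := add_le_add card_image_le hlast

open scoped Classical in
lemma card_filter_ends_subset_le (hγ : IsPseudolineFamily γ) (S : Finset (α × β)) :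
    #{e ∈ edges γ L P | e.ends γ ⊆ S} ≤
      3 * #S + #{x ∈ crossings γ L P | x.1.ends γ ∪ x.2.ends γ ⊆ S} := by
  set E : Finset (Arc ι α) := {e ∈ edges γ L P | e.ends γ ⊆ S}
  set X : Finset (Arc ι α × Arc ι α) := {x ∈ crossings γ L P | x.1.ends γ ∪ x.2.ends γ ⊆ S}
  set F : Finset (Arc ι α) := {e ∈ E | ∀ f ∈ E, ¬e.Crosses γ f}
  have hE : ∀ e ∈ E, IsEdge γ L P e ∧ e.ends γ ⊆ S := fun e he ↦
    ⟨mem_edges.1 (mem_filter.1 he).1, (mem_filter.1 he).2⟩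
  have hF : ∀ e ∈ F, e ∈ E := fun e he ↦ (mem_filter.1 he).1
  have hdrawing : IsPlaneDrawing γ S F :=
    { left_lt_right := fun e he ↦ (hE e (hF e he)).1.left_lt_right
      source_mem := fun e he ↦ (Arc.ends_subset.1 (hE e (hF e he)).2).1
      target_mem := fun e he ↦ (Arc.ends_subset.1 (hE e (hF e he)).2).2
      eq_of_source_eq := fun e he f hf ↦ (hE e (hF e he)).1.eq_of_source_eq (hE f (hF f hf)).1
      not_crosses := fun e he f hf ↦ (mem_filter.1 he).2 f (hF f hf) }
  have hcover : E ⊆ F ∪ X.image Prod.fst := by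
    intro e he
    by_cases hcross : ∀ f ∈ E, ¬e.Crosses γ f
    · exact mem_union_left _ (mem_filter.2 ⟨he, hcross⟩)
    push Not at hcross
    obtain ⟨f, hf, hcross⟩ := hcross
    refine mem_union_right _ (mem_image.2 ⟨(e, f), mem_filter.2 ⟨?_, ?_⟩, rfl⟩)
    · exact mem_crossings.2 ⟨⟨(hE e he).1, (hE f hf).1⟩, hcross⟩
    · exact union_subset (hE e he).2 (hE f hf).2
  calc #E ≤ #F + #(X.image Prod.fst) := (card_le_card hcover).trans (card_union_le _ _)
    _ ≤ 3 * #S + #X := add_le_add (hdrawing.card_le hγ) card_image_le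

/-- The expectation of `card_filter_ends_subset_le` for a random `S ⊆ P` containing each point with
probability `p`: an edge survives with probability `p ^ 2` and, the four ends of two crossing edges
being distinct, a crossing survives with probability `p ^ 4`. -/
lemma sq_mul_card_edges_le (hγ : IsPseudolineFamily γ) {p : ℝ} (hp₀ : 0 ≤ p) (hp₁ : p ≤ 1) :
    p ^ 2 * #(edges γ L P) ≤ 3 * (p * #P) + p ^ 4 * #(crossings γ L P) := by
  classical
  have hp : p + (1 - p) = 1 := by ring
  rw [← sum_powerset_pow_mul_pow_mul_card_filter hp (fun e he ↦ (mem_edges.1 he).ends_subset)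
      (fun e he ↦ Arc.card_ends (mem_edges.1 he).left_lt_right),
    ← sum_powerset_pow_mul_pow_mul_card hp,
    ← sum_powerset_pow_mul_pow_mul_card_filter hp (k := 4)
      (T := fun x ↦ x.1.ends γ ∪ x.2.ends γ) ?_ ?_,
    mul_sum, ← sum_add_distrib]
  · refine sum_le_sum fun S _ ↦ ?_
    have hweight : 0 ≤ p ^ #S * (1 - p) ^ #(P \ S) := by
      have := sub_nonneg.2 hp₁
      positivity
    have hcard : (#{e ∈ edges γ L P | e.ends γ ⊆ S} : ℝ) ≤
        3 * #S + #{x ∈ crossings γ L P | x.1.ends γ ∪ x.2.ends γ ⊆ S} := by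
      exact_mod_cast card_filter_ends_subset_le hγ S
    linarith [mul_le_mul_of_nonneg_left hcard hweight]
  · intro x hx
    obtain ⟨⟨hx₁, hx₂⟩, -⟩ := mem_crossings.1 hx
    exact union_subset hx₁.ends_subset hx₂.ends_subset
  · intro x hx
    obtain ⟨⟨hx₁, hx₂⟩, hcross⟩ := mem_crossings.1 hx
    rw [card_union_of_disjoint (hcross.disjoint_ends hγ), Arc.card_ends hx₁.left_lt_right,
      Arc.card_ends hx₂.left_lt_right]

end IncidenceGraph

section SzemerediTrotter

variable {ι α β : Type*} [LinearOrder α] [LinearOrder β] {γ : ι → α → β}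

lemma le_of_forall_sq_mul_le {A m n : ℝ} (hm : 0 ≤ m) (hn : 0 < n)
    (h : ∀ p : ℝ, 0 ≤ p → p ≤ 1 → p ^ 2 * A ≤ 3 * (p * n) + p ^ 4 * m ^ 2) :
    A ≤ 4 * (m * n) ^ (2 / 3 : ℝ) + 4 * n := by
  have exists_cube_root : ∀ x : ℝ, 0 ≤ x → ∃ y, 0 ≤ y ∧ y ^ 3 = x := fun x hx ↦
    ⟨x ^ (3 : ℝ)⁻¹, by positivity, by exact_mod_cast Real.rpow_inv_natCast_pow hx three_ne_zero⟩
  obtain ⟨s, hs, rfl⟩ := exists_cube_root m hm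
  obtain ⟨q, hq, rfl⟩ := exists_cube_root n hn.le
  replace hq : 0 < q := hq.lt_of_ne fun h ↦ by simp [← h] at hn
  have hpow : (s ^ 3 * q ^ 3) ^ (2 / 3 : ℝ) = s ^ 2 * q ^ 2 := by
    rw [← mul_pow, ← mul_pow, ← Real.rpow_natCast, ← Real.rpow_mul (by positivity)]
    norm_num
  rw [hpow]
  rcases le_or_gt q (s ^ 2) with hqs | hqs
  · have hs : 0 < s := hs.lt_of_ne fun h ↦ by simp [← h] at hqs; linarith
    -- This `p = (n / m ^ 2) ^ (1 / 3)` balances the two terms on the right-hand side of `h`.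
    have hp : (q / s ^ 2) ^ 2 * A ≤ (q / s ^ 2) ^ 2 * (4 * (s ^ 2 * q ^ 2)) :=
      (h (q / s ^ 2) (by positivity) (div_le_one_of_le₀ hqs (by positivity))).trans_eq <| by
        field_simp
        ring
    have hA : A ≤ 4 * (s ^ 2 * q ^ 2) := le_of_mul_le_mul_left hp (by positivity)
    linarith
  · have hA := h 1 zero_le_one le_rfl
    have hcube : (s ^ 2) ^ 3 ≤ q ^ 3 := by gcongr
    have : 0 ≤ s ^ 2 * q ^ 2 := by positivity
    linarith

theorem szemeredi_trotter (hγ : IsPseudolineFamily γ) (L : Finset ι) (P : Finset (α × β)) :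
    (#(incidences γ L P) : ℝ) ≤ 4 * (#L * #P : ℝ) ^ (2 / 3 : ℝ) + 4 * #P + #L := by
  rcases P.eq_empty_or_nonempty with rfl | hP
  · simp [incidences]
  have hedges : (#(edges γ L P) : ℝ) ≤ 4 * (#L * #P : ℝ) ^ (2 / 3 : ℝ) + 4 * #P := by
    refine le_of_forall_sq_mul_le (Nat.cast_nonneg _) (Nat.cast_pos.2 hP.card_pos)
      fun p hp₀ hp₁ ↦ (sq_mul_card_edges_le hγ hp₀ hp₁).trans ?_
    gcongr
    exact_mod_cast card_crossings_le hγ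
  have hincidences : (#(incidences γ L P) : ℝ) ≤ #(edges γ L P) + #L := by
    exact_mod_cast card_incidences_le (γ := γ)
  linarith

end SzemerediTrotter

section Translates

variable {𝕜 : Type*} [Field 𝕜] [LinearOrder 𝕜] [IsStrictOrderedRing 𝕜] {φ : 𝕜 → 𝕜}

lemma add_lt_add_of_strictConvexOn {s : Set 𝕜} (hφ : StrictConvexOn 𝕜 s φ) {x y d : 𝕜}
    (hx : x ∈ s) (hy : y + d ∈ s) (hxy : x < y) (hd : 0 < d) :
    φ (x + d) + φ y < φ x + φ (y + d) := by
  have hpos : 0 < y - x + d := by linarith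
  set t := d / (y - x + d)
  have htd : t * (y - x + d) = d := div_mul_cancel₀ d hpos.ne'
  have ht₀ : 0 < t := div_pos hd hpos
  have ht₁ : 0 < 1 - t := sub_pos.2 ((div_lt_one hpos).2 (by linarith))
  have hne : x ≠ y + d := by linarith
  have h₁ := hφ.2 hx hy hne ht₁ ht₀ (by ring)
  have h₂ := hφ.2 hx hy hne ht₀ ht₁ (by ring)
  simp only [smul_eq_mul] at h₁ h₂
  rw [show (1 - t) * x + t * (y + d) = x + d by linear_combination htd] at h₁
  rw [show t * x + (1 - t) * (y + d) = y by linear_combination -htd] at h₂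
  linear_combination h₁ + h₂

theorem isPseudolineFamily_translates (hφ : StrictConvexOn 𝕜 Set.univ φ) :
    IsPseudolineFamily fun (a : 𝕜 × 𝕜) s ↦ a.2 + φ (s - a.1) := by
  have overtakes_of_lt : ∀ {a b : 𝕜 × 𝕜}, a.1 < b.1 →
      Overtakes (fun s ↦ a.2 + φ (s - a.1)) fun s ↦ b.2 + φ (s - b.1) := by
    intro a b hab x y hxy hle
    have h := add_lt_add_of_strictConvexOn hφ trivial trivial
      (sub_lt_sub_right hxy b.1) (sub_pos.2 hab)
    simp only [sub_add_sub_cancel] at h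
    dsimp only at hle ⊢
    linarith
  have overtakes_of_eq : ∀ {a b : 𝕜 × 𝕜}, a.1 = b.1 → b.2 < a.2 →
      Overtakes (fun s ↦ a.2 + φ (s - a.1)) fun s ↦ b.2 + φ (s - b.1) := by
    intro a b hab hlt x y _ _
    simpa only [hab, add_lt_add_iff_right] using hlt
  intro a b hne
  rcases lt_trichotomy a.1 b.1 with hlt | heq | hlt
  · exact .inl (overtakes_of_lt hlt)
  · rcases lt_or_gt_of_ne fun h ↦ hne (Prod.ext heq h) with hlt | hlt
    exacts [.inr (overtakes_of_eq heq.symm hlt), .inl (overtakes_of_eq heq hlt)]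
  · exact .inr (overtakes_of_lt hlt)

end Translates

section Hyperbolas

lemma strictConvexOn_sqrt_sq_add {c : ℝ} (hc : 0 < c) :
    StrictConvexOn ℝ Set.univ fun s ↦ √(s ^ 2 + c) := by
  refine ⟨convex_univ, fun x _ y _ hxy a b ha hb hab ↦ ?_⟩
  obtain rfl : b = 1 - a := by linarith
  have hx : √(x ^ 2 + c) ^ 2 = x ^ 2 + c := Real.sq_sqrt (by positivity)
  have hy : √(y ^ 2 + c) ^ 2 = y ^ 2 + c := Real.sq_sqrt (by positivity)
  have hsq : 0 < c * (x - y) ^ 2 := mul_pos hc (sq_pos_of_ne_zero (sub_ne_zero.2 hxy))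
  have hcauchy : x * y + c < √(x ^ 2 + c) * √(y ^ 2 + c) := by
    refine lt_of_pow_lt_pow_left₀ 2 (by positivity) ?_
    rw [mul_pow, hx, hy]
    linarith
  simp only [smul_eq_mul]
  rw [Real.sqrt_lt' (by positivity)]
  have hmul := mul_lt_mul_of_pos_left hcauchy (mul_pos ha hb)
  linear_combination 2 * hmul - a ^ 2 * hx - (1 - a) ^ 2 * hy

/-- The coordinates `(x - y, x + y)`. In these the hyperbola branch `(x - a) * (y - b) = 1`,
`a < x`, is a translate of the graph of `s ↦ √(s ^ 2 + 4)`. -/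
def diagonalCoords (p : ℝ × ℝ) : ℝ × ℝ := (p.1 - p.2, p.1 + p.2)

lemma diagonalCoords_injective : Function.Injective diagonalCoords := by
  intro p q h
  obtain ⟨hsub, hadd⟩ := Prod.mk.inj h
  exact Prod.ext (by linarith) (by linarith)

/-- The hyperbola branches in the coordinates `diagonalCoords`, indexed by their centre. -/
noncomputable def hyperbola (a : ℝ × ℝ) (s : ℝ) : ℝ := a.2 + √((s - a.1) ^ 2 + 4)

lemma isPseudolineFamily_hyperbola : IsPseudolineFamily hyperbola :=
  isPseudolineFamily_translates (strictConvexOn_sqrt_sq_add four_pos)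

lemma hyperbola_diagonalCoords {p q : ℝ × ℝ} (h₁ : p.1 < q.1) (h₂ : p.2 < q.2)
    (hpq : (q.1 - p.1) * (q.2 - p.2) = 1) :
    hyperbola (diagonalCoords p) (diagonalCoords q).1 = (diagonalCoords q).2 := by
  have hsq : (q.1 - q.2 - (p.1 - p.2)) ^ 2 + 4 = (q.1 + q.2 - (p.1 + p.2)) ^ 2 := by
    linear_combination -4 * hpq
  simp only [hyperbola, diagonalCoords]
  rw [hsq, Real.sqrt_sq (by linarith), add_sub_cancel]

lemma ncard_unit_area_pairs_le (P : Finset (ℝ × ℝ)) :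
    {q : (ℝ × ℝ) × ℝ × ℝ | q.1 ∈ P ∧ q.2 ∈ P ∧ q.1.1 < q.2.1 ∧ q.1.2 < q.2.2 ∧
      (q.2.1 - q.1.1) * (q.2.2 - q.1.2) = 1}.ncard ≤
      #(incidences hyperbola (P.image diagonalCoords) (P.image diagonalCoords)) := by
  rw [← Set.ncard_coe_finset]
  refine Set.ncard_le_ncard_of_injOn (Prod.map diagonalCoords diagonalCoords) ?_
    (diagonalCoords_injective.prodMap diagonalCoords_injective).injOn (finite_toSet _)
  rintro q ⟨hp, hq, h₁, h₂, harea⟩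
  exact mem_incidences.2 ⟨⟨mem_image_of_mem _ hp, mem_image_of_mem _ hq⟩,
    hyperbola_diagonalCoords h₁ h₂ harea⟩

end Hyperbolas

end Pseudoline

theorem unit_area_rectangles_upper_bound :
    ∃ C : ℝ, 0 < C ∧ ∀ (n : ℕ), 1 ≤ n →
      ∀ P : Finset (ℝ × ℝ), P.card = n →
        (({q : (ℝ × ℝ) × ℝ × ℝ | q.1 ∈ P ∧ q.2 ∈ P ∧
            q.1.1 < q.2.1 ∧ q.1.2 < q.2.2 ∧
            (q.2.1 - q.1.1) * (q.2.2 - q.1.2) = 1} :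
            Set ((ℝ × ℝ) × ℝ × ℝ)).ncard : ℝ)
          ≤ C * (n : ℝ) ^ ((4 : ℝ) / 3) := by
  refine ⟨9, by norm_num, fun n hn P hP ↦ ?_⟩
  have hn₁ : (1 : ℝ) ≤ n := Nat.one_le_cast.2 hn
  have htrotter := Pseudoline.szemeredi_trotter Pseudoline.isPseudolineFamily_hyperbola
    (P.image Pseudoline.diagonalCoords) (P.image Pseudoline.diagonalCoords)
  rw [Finset.card_image_of_injective P Pseudoline.diagonalCoords_injective, hP] at htrotter
  have hpow : (n * n : ℝ) ^ (2 / 3 : ℝ) = (n : ℝ) ^ (4 / 3 : ℝ) := by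
    rw [← sq, ← Real.rpow_natCast, ← Real.rpow_mul n.cast_nonneg]
    norm_num
  have hlinear : (n : ℝ) ≤ (n : ℝ) ^ (4 / 3 : ℝ) :=
    Real.self_le_rpow_of_one_le hn₁ (by norm_num)
  calc _ ≤ (_ : ℝ) := Nat.cast_le.2 (Pseudoline.ncard_unit_area_pairs_le P)
    _ ≤ 4 * (n * n : ℝ) ^ (2 / 3 : ℝ) + 4 * n + n := htrotter
    _ ≤ 9 * (n : ℝ) ^ (4 / 3 : ℝ) := by linarith
end

section
/- There exists a constant c > 0 such that for all sufficiently large n there exists a set P of n points in the plane ℝ² for which the number of ordered pairs (p, q) of points of P with p₁ < q₁, p₂ < q₂, and (q₁ − p₁)(q₂ − p₂) = 1 is at least n^(1 + c/(log log n)). -/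
/-! Let `m` be a product of many small primes with `m ≤ n ^ (1 / 4)`, and take the grid of all
points `(i / m, j)` with `0 ≤ i, j < √n`. Every factorization `m = d * e` and every grid point
`(i / m, j)` with `i, j < √n - m` give a unit-area rectangle with opposite corner
`((i + d) / m, j + e)`, so there are about `n * τ(m)` of them. Choosing `m` to be the primorial
of `log n / (4 * log 4)` makes `τ(m) = 2 ^ π(log n / (4 * log 4))`, which is at least
`n ^ (c / log (log n))` by Chebyshev's bounds. -/

open Filter Finset
open scoped Nat.Prime

section UnitAreaPairs

variable {K : Type*} [Ring K] [LT K]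

/-- The pairs of points of `P` that are the bottom-left and top-right corner of an axis-parallel
rectangle of area `1`, i.e. the rectangles counted in the theorem. -/
def unitAreaPairs (P : Set (K × K)) : Set ((K × K) × K × K) :=
  {q | q.1 ∈ P ∧ q.2 ∈ P ∧ q.1.1 < q.2.1 ∧ q.1.2 < q.2.2 ∧
    (q.2.1 - q.1.1) * (q.2.2 - q.1.2) = 1}

theorem unitAreaPairs_mono {P Q : Set (K × K)} (h : P ⊆ Q) :
    unitAreaPairs P ⊆ unitAreaPairs Q :=
  fun _ ⟨h₁, h₂, hq⟩ ↦ ⟨h h₁, h h₂, hq⟩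

theorem finite_unitAreaPairs {P : Set (K × K)} (hP : P.Finite) : (unitAreaPairs P).Finite :=
  (hP.prod hP).subset fun _ ⟨h₁, h₂, _⟩ ↦ ⟨h₁, h₂⟩

end UnitAreaPairs

section Grid

variable {K : Type*} [Field K]

variable (K) in
/-- The point of index `(i, j)` in the integer grid compressed horizontally by the factor `m`,
so that index steps `(d, e)` with `d * e = m` span unit area. -/
def gridPoint (m : ℕ) (z : ℕ × ℕ) : K × K :=
  (z.1 / m, z.2)

theorem gridPoint_injective [CharZero K] {m : ℕ} (hm : m ≠ 0) :
    Function.Injective (gridPoint K m) := by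
  intro z w h
  have hm' : (m : K) ≠ 0 := Nat.cast_ne_zero.mpr hm
  simpa [gridPoint, div_left_inj' hm', Prod.ext_iff] using h

variable (K) in
/-- The `s × s` grid formed by the points `gridPoint K m (i, j)` with `i, j < s`. -/
def compressedGrid [DecidableEq K] (m s : ℕ) : Finset (K × K) :=
  (range s ×ˢ range s).image (gridPoint K m)

theorem card_compressedGrid_le [DecidableEq K] (m s : ℕ) : #(compressedGrid K m s) ≤ s * s :=
  card_image_le.trans_eq (by simp)

variable [LinearOrder K] [IsStrictOrderedRing K]

theorem gridPoint_add_mem_unitAreaPairs {m s : ℕ} {z w : ℕ × ℕ}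
    (hz : z ∈ range (s - m) ×ˢ range (s - m)) (hw : w ∈ m.divisorsAntidiagonal) :
    (gridPoint K m z, gridPoint K m (z + w)) ∈ unitAreaPairs (compressedGrid K m s : Set _) := by
  obtain ⟨i, j⟩ := z
  obtain ⟨d, e⟩ := w
  obtain ⟨rfl, hm⟩ := Nat.mem_divisorsAntidiagonal.mp hw
  obtain ⟨hd, he⟩ := mul_ne_zero_iff.mp hm
  have hd_le : d ≤ d * e := Nat.le_mul_of_pos_right d (Nat.pos_of_ne_zero he)
  have he_le : e ≤ d * e := Nat.le_mul_of_pos_left e (Nat.pos_of_ne_zero hd)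
  simp only [mem_product, mem_range] at hz
  refine ⟨mem_image_of_mem _ ?_, mem_image_of_mem _ ?_, ?_, ?_, ?_⟩
  · simp only [mem_product, mem_range]
    lia
  · simp only [Prod.mk_add_mk, mem_product, mem_range]
    lia
  · simp only [gridPoint, Prod.mk_add_mk, Nat.cast_add]
    gcongr
    exact lt_add_of_pos_right _ (by positivity)
  · simpa [gridPoint] using Nat.pos_of_ne_zero he
  · have hde : (d * e : K) ≠ 0 := mod_cast hm
    simp only [gridPoint, Prod.mk_add_mk, Nat.cast_add, Nat.cast_mul]
    rw [← sub_div, add_sub_cancel_left, add_sub_cancel_left, div_mul_eq_mul_div, div_self hde]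

theorem card_divisorsAntidiagonal (m : ℕ) : #m.divisorsAntidiagonal = #m.divisors := by
  rw [← Nat.map_div_right_divisors, card_map]

theorem sub_sq_mul_card_divisors_le_ncard_unitAreaPairs (m s : ℕ) :
    (s - m) ^ 2 * #m.divisors ≤ (unitAreaPairs (compressedGrid K m s : Set (K × K))).ncard := by
  rcases eq_or_ne m 0 with rfl | hm
  · simp
  let index : Finset ((ℕ × ℕ) × ℕ × ℕ) :=
    (range (s - m) ×ˢ range (s - m)) ×ˢ m.divisorsAntidiagonal
  let corners : (ℕ × ℕ) × ℕ × ℕ → (K × K) × K × K :=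
    fun t ↦ (gridPoint K m t.1, gridPoint K m (t.1 + t.2))
  have corners_injective : Function.Injective corners := by
    rintro ⟨z, w⟩ ⟨z', w'⟩ h
    obtain ⟨hz, hzw⟩ := Prod.mk.inj h
    obtain rfl : z = z' := gridPoint_injective hm hz
    exact congrArg (z, ·) (add_left_cancel (gridPoint_injective hm hzw))
  have image_subset : corners '' index ⊆ unitAreaPairs (compressedGrid K m s : Set (K × K)) := by
    rintro _ ⟨t, ht, rfl⟩
    obtain ⟨hz, hw⟩ := mem_product.mp (mem_coe.mp ht)
    exact gridPoint_add_mem_unitAreaPairs hz hw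
  calc (s - m) ^ 2 * #m.divisors = #index := by
        simp [index, sq, card_divisorsAntidiagonal]
    _ = (corners '' index).ncard := by
        rw [Set.ncard_image_of_injective _ corners_injective, Set.ncard_coe_finset]
    _ ≤ _ := Set.ncard_le_ncard image_subset (finite_unitAreaPairs (finite_toSet _))

variable (K) in
theorem exists_card_eq_and_le_ncard_unitAreaPairs (n m : ℕ) :
    ∃ P : Finset (K × K), #P = n ∧
      (n.sqrt - m) ^ 2 * #m.divisors ≤ (unitAreaPairs (P : Set (K × K))).ncard := by
  have : Infinite K := Infinite.of_injective ((↑) : ℕ → K) Nat.cast_injective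
  obtain ⟨P, hGP, hP⟩ := Infinite.exists_superset_card_eq (compressedGrid K m n.sqrt) n
    ((card_compressedGrid_le m n.sqrt).trans n.sqrt_le)
  refine ⟨P, hP, (sub_sq_mul_card_divisors_le_ncard_unitAreaPairs (K := K) m n.sqrt).trans ?_⟩
  exact Set.ncard_le_ncard (unitAreaPairs_mono (coe_subset.mpr hGP))
    (finite_unitAreaPairs P.finite_toSet)

end Grid

section DivisorFunction

theorem card_divisors_of_squarefree {m : ℕ} (hm : Squarefree m) :
    #m.divisors = 2 ^ #m.primeFactors := by
  rw [Nat.card_divisors hm.ne_zero]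
  refine prod_eq_pow_card fun p hp ↦ ?_
  rw [Nat.factorization_eq_one_of_squarefree hm (Nat.prime_of_mem_primeFactors hp)
    (Nat.dvd_of_mem_primeFactors hp)]

theorem card_divisors_primorial (k : ℕ) : #(primorial k).divisors = 2 ^ π k := by
  rw [card_divisors_of_squarefree (squarefree_primorial k), primeFactors_primorial,
    Nat.primesLE_card_eq_primeCounting]

theorem eventually_le_primeCounting {c : ℝ} (hc : c < Real.log 2) :
    ∀ᶠ x : ℝ in atTop, c * x / Real.log x ≤ π ⌊x⌋₊ := by
  set δ := Real.log 2 - c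
  have hδ : 0 < δ := sub_pos.mpr hc
  filter_upwards [eventually_ge_atTop 2, eventually_ge_atTop (2 * Real.log 2 / (δ / 2)),
    Real.isLittleO_log_id_atTop.bound (half_pos hδ)] with x hx hconst hlog
  have hlog_pos : 0 < Real.log x := Real.log_pos (by linarith)
  rw [div_le_iff₀ (half_pos hδ)] at hconst
  rw [id, Real.norm_of_nonneg hlog_pos.le, Real.norm_of_nonneg (by linarith)] at hlog
  have hlog_add : Real.log (x + 2) ≤ Real.log 2 + Real.log x := by
    rw [← Real.log_mul two_ne_zero (by linarith)]
    exact Real.log_le_log (by linarith) (by linarith)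
  refine le_trans ?_ (Chebyshev.pi_ge' (by linarith))
  gcongr
  linarith

theorem primorial_floor_log_div_log_four_le {x : ℝ} (hx : 1 ≤ x) :
    (primorial ⌊Real.log x / Real.log 4⌋₊ : ℝ) ≤ x := by
  have hlog4 : 0 < Real.log 4 := Real.log_pos (by norm_num)
  rw [← Real.log_le_log_iff (mod_cast primorial_pos _) (by linarith),
    ← Chebyshev.theta_eq_log_primorial]
  calc Chebyshev.theta (Real.log x / Real.log 4)
      ≤ Real.log 4 * (Real.log x / Real.log 4) :=
        Chebyshev.theta_le_log4_mul_x (div_nonneg (Real.log_nonneg hx) hlog4.le)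
    _ = Real.log x := mul_div_cancel₀ _ hlog4.ne'

theorem eventually_exists_le_and_rpow_le_card_divisors {c : ℝ} (hc₀ : 0 ≤ c)
    (hc : c < Real.log 2 / 2) :
    ∀ᶠ x : ℝ in atTop, ∃ m : ℕ, m ≤ x ∧ x ^ (c / Real.log (Real.log x)) ≤ #m.divisors := by
  have hlog4 : Real.log 4 = 2 * Real.log 2 := by
    rw [show (4 : ℝ) = 2 ^ 2 by norm_num, Real.log_pow, Nat.cast_two]
  have one_le_log4 : 1 ≤ Real.log 4 := by linarith [Real.log_two_gt_d9]
  have htendsto : Tendsto (fun x ↦ Real.log x / Real.log 4) atTop atTop :=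
    Real.tendsto_log_atTop.atTop_div_const (by positivity)
  have hπ := htendsto.eventually (eventually_le_primeCounting (c := 2 * c) (by linarith))
  filter_upwards [hπ, htendsto.eventually_gt_atTop 1, eventually_gt_atTop 1] with x hπ hy hx
  set y := Real.log x / Real.log 4 with hy_def
  refine ⟨primorial ⌊y⌋₊, primorial_floor_log_div_log_four_le hx.le, ?_⟩
  have hlogx : 0 < Real.log x := Real.log_pos hx
  have hlogy : 0 < Real.log y := Real.log_pos hy
  have hlogy_le : Real.log y ≤ Real.log (Real.log x) :=
    Real.log_le_log (by linarith) (div_le_self hlogx.le one_le_log4)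
  have hexponent : Real.log x * (c / Real.log (Real.log x)) ≤ Real.log 2 * π ⌊y⌋₊ :=
    calc Real.log x * (c / Real.log (Real.log x)) = c * Real.log x / Real.log (Real.log x) := by
          ring
      _ ≤ c * Real.log x / Real.log y := by gcongr
      _ = Real.log 2 * (2 * c * y / Real.log y) := by
          rw [hy_def, hlog4]
          field_simp
      _ ≤ Real.log 2 * π ⌊y⌋₊ := by gcongr
  calc x ^ (c / Real.log (Real.log x)) = Real.exp (Real.log x * (c / Real.log (Real.log x))) :=
        Real.rpow_def_of_pos (by linarith) _
    _ ≤ Real.exp (Real.log 2 * π ⌊y⌋₊) := Real.exp_le_exp.mpr hexponent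
    _ = #(primorial ⌊y⌋₊).divisors := by
        rw [← Real.rpow_def_of_pos two_pos, Real.rpow_natCast, card_divisors_primorial]
        norm_cast

theorem eventually_exists_le_rpow_and_rpow_le_card_divisors {a c : ℝ} (ha₀ : 0 < a) (ha : a ≤ 1)
    (hc₀ : 0 ≤ c) (hc : c < Real.log 2 / 2) :
    ∀ᶠ x : ℝ in atTop, ∃ m : ℕ, m ≤ x ^ a ∧
      x ^ (a * c / Real.log (Real.log x)) ≤ #m.divisors := by
  have hlog := Real.tendsto_log_atTop.const_mul_atTop ha₀
  filter_upwards [(tendsto_rpow_atTop ha₀).eventually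
      (eventually_exists_le_and_rpow_le_card_divisors hc₀ hc),
    eventually_gt_atTop 1, hlog.eventually_gt_atTop 1] with x ⟨m, hm, hcard⟩ hx hax
  refine ⟨m, hm, le_trans ?_ hcard⟩
  have hlogx : 0 < Real.log x := Real.log_pos hx
  have hloglog_pos : 0 < Real.log (a * Real.log x) := Real.log_pos hax
  rw [← Real.rpow_mul (by linarith), Real.log_rpow (by linarith), mul_div_assoc]
  gcongr
  · exact hx.le
  · exact mul_le_of_le_one_left hlogx.le ha

end DivisorFunction

section Asymptotics

theorem tendsto_rpow_div_log_log_atTop {c : ℝ} (hc : 0 < c) :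
    Tendsto (fun x : ℝ ↦ x ^ (c / Real.log (Real.log x))) atTop atTop := by
  have hloglog := Real.tendsto_log_atTop.comp Real.tendsto_log_atTop
  have hexponent := (((Real.tendsto_exp_div_pow_atTop 1).comp hloglog).const_mul_atTop hc)
  refine (Real.tendsto_exp_atTop.comp hexponent).congr' ?_
  filter_upwards [eventually_gt_atTop 1] with x hx
  have hlogx : 0 < Real.log x := Real.log_pos hx
  simp only [Function.comp_apply, Real.exp_log hlogx, pow_one]
  rw [Real.rpow_def_of_pos (by linarith)]
  congr 1
  ring

theorem eventually_sqrt_div_two_le_natSqrt_sub {a : ℝ} (ha : a < 1 / 2) :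
    ∀ᶠ n : ℕ in atTop, ∀ m : ℕ, (m : ℝ) ≤ (n : ℝ) ^ a →
      √n / 2 ≤ ((n.sqrt - m : ℕ) : ℝ) := by
  have hsqrt := Real.tendsto_sqrt_atTop.comp (tendsto_natCast_atTop_atTop (R := ℝ))
  have hrpow := (tendsto_rpow_atTop (sub_pos.mpr ha)).comp (tendsto_natCast_atTop_atTop (R := ℝ))
  filter_upwards [eventually_gt_atTop 0, hsqrt.eventually_ge_atTop 4,
    hrpow.eventually_ge_atTop 4] with n hn hsqrt hrpow m hm
  simp only [Function.comp_apply] at hsqrt hrpow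
  have hn' : (0 : ℝ) < n := mod_cast hn
  have hm_le : 4 * (m : ℝ) ≤ √n :=
    calc 4 * (m : ℝ) ≤ (n : ℝ) ^ (1 / 2 - a) * (n : ℝ) ^ a := by gcongr
      _ = √n := by rw [← Real.rpow_add hn', sub_add_cancel, Real.sqrt_eq_rpow]
  have hfloor : √n ≤ n.sqrt + 1 := Real.real_sqrt_le_nat_sqrt_succ
  have hsub : (n.sqrt : ℝ) ≤ (n.sqrt - m : ℕ) + m := mod_cast le_tsub_add
  linarith

end Asymptotics

theorem unit_area_rectangles_lower_bound :
    ∃ c : ℝ, 0 < c ∧ ∃ N : ℕ, ∀ n : ℕ, N ≤ n →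
      ∃ P : Finset (ℝ × ℝ), P.card = n ∧
        (n : ℝ) ^ (1 + c / Real.log (Real.log n)) ≤
          (({q : (ℝ × ℝ) × ℝ × ℝ | q.1 ∈ P ∧ q.2 ∈ P ∧
              q.1.1 < q.2.1 ∧ q.1.2 < q.2.2 ∧
              (q.2.1 - q.1.1) * (q.2.2 - q.1.2) = 1} :
              Set ((ℝ × ℝ) × ℝ × ℝ)).ncard : ℝ) := by
  have hdivisors := eventually_exists_le_rpow_and_rpow_le_card_divisors (a := 1 / 4) (c := 1 / 4)
    (by norm_num) (by norm_num) (by norm_num) (by linarith [Real.log_two_gt_d9])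
  have hfour := (tendsto_rpow_div_log_log_atTop (c := 1 / 32) (by norm_num)).eventually_ge_atTop 4
  refine ⟨1 / 32, by norm_num, eventually_atTop.mp ?_⟩
  filter_upwards [eventually_gt_atTop 0, tendsto_natCast_atTop_atTop.eventually hdivisors,
    tendsto_natCast_atTop_atTop.eventually hfour,
    eventually_sqrt_div_two_le_natSqrt_sub (a := 1 / 4) (by norm_num)]
    with n hn ⟨m, hm, hcard⟩ hfour hsqrt
  obtain ⟨P, hP, hcount⟩ := exists_card_eq_and_le_ncard_unitAreaPairs ℝ n m
  refine ⟨P, hP, ?_⟩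
  have hn' : (0 : ℝ) < n := mod_cast hn
  set r := (n : ℝ) ^ (1 / 32 / Real.log (Real.log n)) with hr
  calc (n : ℝ) ^ (1 + 1 / 32 / Real.log (Real.log n)) = n / 4 * (4 * r) := by
        rw [Real.rpow_add hn', Real.rpow_one]
        ring
    _ ≤ n / 4 * (r * r) := by gcongr
    _ = (√n / 2) ^ 2 * (n : ℝ) ^ (1 / 4 * (1 / 4) / Real.log (Real.log n)) := by
        rw [hr, ← Real.rpow_add hn', div_pow, Real.sq_sqrt hn'.le]
        ring_nf
    _ ≤ ((n.sqrt - m : ℕ) : ℝ) ^ 2 * #m.divisors := by gcongr; exact hsqrt m hm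
    _ ≤ (unitAreaPairs (P : Set (ℝ × ℝ))).ncard := mod_cast hcount
end

section
/- Let d ≥ 2 and let A be a d×n totally positive real matrix with columns p_1, ..., p_n ∈ ℝ^d. For a strictly increasing (d-1)-tuple I of indices in {1,...,n}, let π_I = {x ∈ ℝ^d : det[p_{i_1}, ..., p_{i_{d-1}}, x] = 1}. Then for any two strictly increasing (d-1)-tuples I ≠ J, the number of indices k ∈ {1,...,n} such that the column p_k lies in π_I ∩ π_J is at most d − 1. -/
/-- A real `m × n` matrix is totally positive if every minor (determinant of a square
submatrix taken on strictly increasing row and column indices) is positive. -/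
def IsTotallyPositive {m n : ℕ} (A : Matrix (Fin m) (Fin n) ℝ) : Prop :=
  ∀ (k : ℕ) (r : Fin k → Fin m) (c : Fin k → Fin n),
    StrictMono r → StrictMono c → 0 < (A.submatrix r c).det

/-- The `(d+1) × (d+1)` matrix whose first `d` columns are the columns of `A` indexed by
`I` and whose last column is `x`. -/
def colMat {d n : ℕ} (A : Matrix (Fin (d + 1)) (Fin n) ℝ) (I : Fin d → Fin n)
    (x : Fin (d + 1) → ℝ) : Matrix (Fin (d + 1)) (Fin (d + 1)) ℝ :=
  Matrix.of fun r c => Fin.snoc (α := fun _ => ℝ) (fun i : Fin d => A r (I i)) (x r) c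

/-!
If the columns of `A` are in general position, two linear functionals taking the same values on
`d + 1` columns are equal. Suppose that `f_I = det[p_I, ·]` and `f_J = det[p_J, ·]` are constant,
equal to `s` and `t`, on `d + 1` columns. Then either `s = t = 0` and `f_I = 0`, or
`t • f_I = s • f_J` is a nontrivial linear relation. But `f_I` vanishes at the column `p_k` exactly
when `k` is in the range of `I`, so `f_I` and `f_J` are linearly independent as soon as `I` and `J`
have different ranges.
-/

open Function Set

theorem linearMap_ext_of_det_ne_zero {R m N : Type*} [CommRing R] [IsDomain R] [Fintype m]
    [DecidableEq m] [AddCommGroup N] [Module R N] [Module.IsTorsionFree R N] {M : Matrix m m R}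
    (hM : M.det ≠ 0) {f g : (m → R) →ₗ[R] N} (hfg : ∀ j, f (M.col j) = g (M.col j)) : f = g := by
  have hcomp : f ∘ₗ M.mulVecLin = g ∘ₗ M.mulVecLin :=
    LinearMap.pi_ext' fun j => LinearMap.ext_ring <| by simpa using hfg j
  refine LinearMap.ext fun x => smul_right_injective N hM ?_
  have hcramer : M.mulVec (M.adjugate.mulVec x) = M.det • x := by
    rw [Matrix.mulVec_mulVec, Matrix.mul_adjugate, Matrix.smul_mulVec, Matrix.one_mulVec]
  calc M.det • f x = f (M.mulVec (M.adjugate.mulVec x)) := by rw [hcramer, map_smul]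
    _ = g (M.mulVec (M.adjugate.mulVec x)) := LinearMap.congr_fun hcomp _
    _ = M.det • g x := by rw [hcramer, map_smul]

theorem exists_injective_of_card_le_encard {α β : Type*} [Fintype α] {s : Set β}
    (h : (Fintype.card α : ℕ∞) ≤ s.encard) : ∃ e : α → β, Injective e ∧ ∀ a, e a ∈ s := by
  obtain ⟨e⟩ : Nonempty (α ↪ s) := by
    rw [Set.encard, ENat.card, Cardinal.natCast_le_toENat] at h
    exact Cardinal.lift_mk_le'.mp (by simpa using h)
  exact ⟨fun a => e a, Subtype.val_injective.comp e.injective, fun a => (e a).2⟩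

theorem exists_mem_range_notMem_range {α β : Type*} [Finite α] {f g : α → β} (hf : Injective f)
    (hg : Injective g) (hfg : range f ≠ range g) : ∃ b ∈ range g, b ∉ range f := by
  by_contra! hsub
  refine hfg (Set.eq_of_subset_of_ncard_le hsub ?_).symm
  rw [ncard_range_of_injective hf, ncard_range_of_injective hg]

/-- The columns of `A` are in linear general position: any `|m|` of them, taken in any order, have
nonzero determinant. -/
def ColumnsInGeneralPosition {R m ι : Type*} [CommRing R] [Fintype m] [DecidableEq m]
    (A : Matrix m ι R) : Prop :=
  ∀ e : m → ι, Injective e → (A.submatrix id e).det ≠ 0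

theorem IsTotallyPositive.columnsInGeneralPosition {m n : ℕ} {A : Matrix (Fin m) (Fin n) ℝ}
    (hA : IsTotallyPositive A) : ColumnsInGeneralPosition A := by
  intro e he hdet
  have hsorted : StrictMono (e ∘ Tuple.sort e) :=
    (Tuple.monotone_sort e).strictMono_of_injective (he.comp (Tuple.sort e).injective)
  have hperm := Matrix.det_permute' (Tuple.sort e) (A.submatrix id e)
  rw [hdet, mul_zero, Matrix.submatrix_submatrix] at hperm
  exact (hA m id _ strictMono_id hsorted).ne' hperm

namespace ColumnsInGeneralPosition

variable {R m ι : Type*} [CommRing R] [IsDomain R] [Fintype m] [DecidableEq m] {A : Matrix m ι R}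

theorem linearMap_ext {N : Type*} [AddCommGroup N] [Module R N] [Module.IsTorsionFree R N]
    (hA : ColumnsInGeneralPosition A) {S : Set ι} (hS : Fintype.card m ≤ S.encard)
    {f g : (m → R) →ₗ[R] N} (hfg : ∀ k ∈ S, f (A.col k) = g (A.col k)) : f = g := by
  obtain ⟨e, he, heS⟩ := exists_injective_of_card_le_encard hS
  exact linearMap_ext_of_det_ne_zero (hA e he) fun j => hfg (e j) (heS j)

theorem encard_lt_of_linearIndependent (hA : ColumnsInGeneralPosition A)
    {f g : (m → R) →ₗ[R] R} (hfg : LinearIndependent R ![f, g]) (s t : R) :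
    {k | f (A.col k) = s ∧ g (A.col k) = t}.encard < Fintype.card m := by
  by_contra! hcard
  have hrel : t • f + -s • g = 0 :=
    hA.linearMap_ext hcard fun k ⟨hf, hg⟩ => by simp [hf, hg, mul_comm]
  obtain ⟨rfl, hs⟩ := LinearIndependent.pair_iff.mp hfg _ _ hrel
  have hf : f = 0 := hA.linearMap_ext hcard fun k hk => by simpa [neg_eq_zero.mp hs] using hk.1
  exact hfg.ne_zero 0 hf

end ColumnsInGeneralPosition

section DetWithColumns

variable {R ι : Type*} [CommRing R] {d : ℕ}

/-- The linear functional `x ↦ det[p_{I 0}, …, p_{I (d - 1)}, x]`, where `p_k` is the `k`-th column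
of `A`. Its level sets are the hyperplanes `π_{t,I}`. Mathlib's determinant is multilinear in the
rows, so the columns `p_k` enter as the rows of the transposed matrix. -/
def detWithColumns (A : Matrix (Fin (d + 1)) ι R) (I : Fin d → ι) : (Fin (d + 1) → R) →ₗ[R] R :=
  Matrix.detRowAlternating.toMultilinearMap.curryRight fun i => A.col (I i)

theorem detWithColumns_col (A : Matrix (Fin (d + 1)) ι R) (I : Fin d → ι) (k : ι) :
    detWithColumns A I (A.col k) = (A.submatrix id (Fin.snoc I k : Fin (d + 1) → ι)).det := by
  calc detWithColumns A I (A.col k) = Matrix.det (Fin.snoc (A.col ∘ I) (A.col k)) := rfl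
    _ = (A.submatrix id (Fin.snoc I k : Fin (d + 1) → ι)).transpose.det := by
      rw [← Fin.comp_snoc]
      rfl
    _ = (A.submatrix id (Fin.snoc I k : Fin (d + 1) → ι)).det := Matrix.det_transpose _

theorem ColumnsInGeneralPosition.detWithColumns_col_eq_zero_iff {A : Matrix (Fin (d + 1)) ι R}
    (hA : ColumnsInGeneralPosition A) {I : Fin d → ι} (hI : Injective I) {k : ι} :
    detWithColumns A I (A.col k) = 0 ↔ k ∈ range I := by
  rw [detWithColumns_col]
  constructor
  · contrapose!
    exact fun hk => hA _ (Fin.snoc_injective_iff.mpr ⟨hI, hk⟩)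
  · rintro ⟨i, rfl⟩
    exact Matrix.det_zero_of_column_eq (Fin.castSucc_lt_last i).ne fun r => by simp

theorem ColumnsInGeneralPosition.linearIndependent_detWithColumns [IsDomain R]
    {A : Matrix (Fin (d + 1)) ι R} (hA : ColumnsInGeneralPosition A) {I J : Fin d → ι}
    (hI : Injective I) (hJ : Injective J) (hIJ : range I ≠ range J) :
    LinearIndependent R ![detWithColumns A I, detWithColumns A J] := by
  obtain ⟨j, hjJ, hjI⟩ := exists_mem_range_notMem_range hI hJ hIJ
  obtain ⟨i, hiI, hiJ⟩ := exists_mem_range_notMem_range hJ hI hIJ.symm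
  rw [← hA.detWithColumns_col_eq_zero_iff hI] at hjI hiI
  rw [← hA.detWithColumns_col_eq_zero_iff hJ] at hjJ hiJ
  refine LinearIndependent.pair_iff.mpr fun a b hab => ⟨?_, ?_⟩
  · simpa [hjJ, hjI] using LinearMap.congr_fun hab (A.col j)
  · simpa [hiI, hiJ] using LinearMap.congr_fun hab (A.col i)

end DetWithColumns

theorem colMat_col {d n : ℕ} (A : Matrix (Fin (d + 1)) (Fin n) ℝ) (I : Fin d → Fin n) (k : Fin n) :
    colMat A I (A.col k) = A.submatrix id (Fin.snoc I k : Fin (d + 1) → Fin n) := by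
  ext r c
  cases c using Fin.lastCases <;> simp [colMat]

theorem columns_on_two_hyperplanes_general {R ι : Type*} [CommRing R] [IsDomain R] {d : ℕ}
    {A : Matrix (Fin (d + 1)) ι R} (hA : ColumnsInGeneralPosition A) {I J : Fin d → ι}
    (hI : Injective I) (hJ : Injective J) (hIJ : range I ≠ range J) (s t : R) :
    {k | detWithColumns A I (A.col k) = s ∧ detWithColumns A J (A.col k) = t}.encard ≤ d := by
  have hlt := hA.encard_lt_of_linearIndependent
    (hA.linearIndependent_detWithColumns hI hJ hIJ) s t
  rw [Fintype.card_fin, Nat.cast_add_one] at hlt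
  exact Order.le_of_lt_add_one hlt

theorem columns_on_two_hyperplanes (d n : ℕ) (hd : 1 ≤ d)
    (A : Matrix (Fin (d + 1)) (Fin n) ℝ) (hA : IsTotallyPositive A)
    (I J : Fin d → Fin n) (hI : StrictMono I) (hJ : StrictMono J) (hIJ : I ≠ J) :
    ({k : Fin n | (colMat A I (fun r => A r k)).det = 1 ∧
        (colMat A J (fun r => A r k)).det = 1} : Set (Fin n)).ncard ≤ d := by
  simp only [← Matrix.col_apply', colMat_col, ← detWithColumns_col]
  exact (encard_le_coe_iff_finite_ncard_le.mp (columns_on_two_hyperplanes_general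
    hA.columnsInGeneralPosition hI.injective hJ.injective ((hI.range_inj hJ).not.mpr hIJ) 1 1)).2
end

section
/- Let d ≥ 2 and let A be a d×n totally positive real matrix with columns p_1, ..., p_n ∈ ℝ^d. For a strictly increasing (d-1)-tuple I of indices in {1,...,n} and a real t > 0, let π_{t,I} = {x ∈ ℝ^d : det[p_{i_1}, ..., p_{i_{d-1}}, x] = t}. Then for any positive reals t₁, t₂ and any strictly increasing (d-1)-tuples I, J with (t₁, I) ≠ (t₂, J), the sets π_{t₁,I} and π_{t₂,J} are distinct. -/
/-!
A nonempty level set of a linear functional determines its kernel, as the space of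
differences of its points. The kernel of `x ↦ det[p_{i₁}, …, p_{i_d}, x]` is the span of the columns
indexed by `I`, and when any `d + 1` columns are independent the only columns it contains are those
indexed by `I`. So equal level sets have equal index sets, hence the same functional, and then
the same level.
-/

lemma encard_range_le {α β : Type*} (f : α → β) : (Set.range f).encard ≤ ENat.card α := by
  rw [← Set.image_univ, ← Set.encard_univ]
  exact Set.encard_image_le f Set.univ

/-- Linear general position: any at most `dim V` of the vectors are linearly independent.
Stated for sets of indices, so repeated vectors are ruled out as soon as `2 ≤ dim V`. In infinite
dimension `finrank` is `0` and the condition is void. -/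
def InLinearGeneralPosition (K : Type*) {V ι : Type*} [DivisionRing K] [AddCommGroup V]
    [Module K V] (v : ι → V) : Prop :=
  ∀ s : Set ι, s.encard ≤ Module.finrank K V → LinearIndepOn K v s

namespace InLinearGeneralPosition

variable {K V ι : Type*} [DivisionRing K] [AddCommGroup V] [Module K V] {v : ι → V}

lemma linearIndependent_comp (hv : InLinearGeneralPosition K v) {κ : Type*} {f : κ → ι}
    (hf : Function.Injective f) (hκ : ENat.card κ ≤ Module.finrank K V) :
    LinearIndependent K (v ∘ f) :=
  (linearIndepOn_range_iff hf v).1 (hv _ ((encard_range_le f).trans hκ))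

lemma mem_of_mem_span_image (hv : InLinearGeneralPosition K v) {s : Set ι}
    (hs : s.encard < Module.finrank K V) {j : ι} (hj : v j ∈ Submodule.span K (v '' s)) : j ∈ s :=
  have insert_indep : LinearIndepOn K v (insert j s) :=
    hv _ ((Set.encard_insert_le s j).trans (Order.add_one_le_of_lt hs))
  (linearIndepOn_insert_iff.1 insert_indep).2 hj

end InLinearGeneralPosition

lemma IsTotallyPositive.inLinearGeneralPosition_col {m n : ℕ} {A : Matrix (Fin m) (Fin n) ℝ}
    (hA : IsTotallyPositive A) : InLinearGeneralPosition ℝ A.col := by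
  intro s hs
  rw [Module.finrank_fin_fun] at hs
  lift s to Finset (Fin n) using Set.finite_of_encard_le_coe hs
  rw [Set.encard_coe_eq_coe_finsetCard, Nat.cast_le] at hs
  let c : Fin s.card ↪o Fin n := s.orderEmbOfFin rfl
  have minor_pos : 0 < (A.submatrix (Fin.castLE hs) c).det :=
    hA s.card (Fin.castLE hs) c (Fin.strictMono_castLE hs) c.strictMono
  have minor_col_indep : LinearIndependent ℝ (A.submatrix (Fin.castLE hs) c).col :=
    Matrix.linearIndependent_cols_iff_isUnit.2
      ((Matrix.isUnit_iff_isUnit_det _).2 minor_pos.ne'.isUnit)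
  have col_indep : LinearIndependent ℝ (A.col ∘ c) :=
    .of_comp (LinearMap.funLeft ℝ ℝ (Fin.castLE hs)) minor_col_indep
  rwa [← linearIndepOn_range_iff c.injective, Finset.range_orderEmbOfFin] at col_indep

lemma ker_le_ker_of_preimage_singleton_eq {R V W W' : Type*} [Semiring R] [AddCommGroup V]
    [AddCommMonoid W] [AddCommGroup W'] [Module R V] [Module R W] [Module R W']
    {f : V →ₗ[R] W} {g : V →ₗ[R] W'} {s : W} {t : W'} (hs : s ∈ LinearMap.range f)
    (h : f ⁻¹' {s} = g ⁻¹' {t}) : LinearMap.ker f ≤ LinearMap.ker g := by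
  obtain ⟨x, hx⟩ := hs
  intro v hv
  have hgx : g x = t := h.subset hx
  have hgxv : g (x + v) = t := h.subset (by simp [hx, LinearMap.mem_ker.1 hv])
  rwa [map_add, hgx, add_eq_left] at hgxv

section LastColumn

variable {d n : ℕ}

/-- The linear functional `x ↦ det[p_{i₁}, …, p_{i_d}, x]`, whose level sets are the hyperplanes
`π_{t,I}`. The `0` is a placeholder for the last column, which Cramer's map replaces by `x`. -/
noncomputable def lastColDet (A : Matrix (Fin (d + 1)) (Fin n) ℝ) (I : Fin d → Fin n) :
    Module.Dual ℝ (Fin (d + 1) → ℝ) :=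
  LinearMap.proj (Fin.last d) ∘ₗ (colMat A I 0).cramer

variable (A : Matrix (Fin (d + 1)) (Fin n) ℝ) (I : Fin d → Fin n) (x : Fin (d + 1) → ℝ)

lemma lastColDet_apply : lastColDet A I x = (colMat A I x).det := by
  have updateCol_last : (colMat A I 0).updateCol (Fin.last d) x = colMat A I x := by
    ext r c
    cases c using Fin.lastCases <;> simp [colMat]
  rw [lastColDet, LinearMap.comp_apply, LinearMap.proj_apply, Matrix.cramer_apply, updateCol_last]

lemma col_colMat : (colMat A I x).col = Fin.snoc (A.col ∘ I) x := by
  ext c r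
  cases c using Fin.lastCases <;> simp [colMat]

lemma lastColDet_ne_zero_iff :
    lastColDet A I x ≠ 0 ↔ LinearIndependent ℝ (Fin.snoc (A.col ∘ I) x : Fin (d + 1) → _) := by
  rw [lastColDet_apply, ← isUnit_iff_ne_zero, ← Matrix.isUnit_iff_isUnit_det,
    ← Matrix.linearIndependent_cols_iff_isUnit, col_colMat]

variable {A I}

lemma ker_lastColDet (hI : LinearIndependent ℝ (A.col ∘ I)) :
    LinearMap.ker (lastColDet A I) = Submodule.span ℝ (Set.range (A.col ∘ I)) := by
  ext x
  rw [LinearMap.mem_ker, ← not_iff_not, ← ne_eq, lastColDet_ne_zero_iff, linearIndependent_finSnoc,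
    and_iff_right hI]

lemma lastColDet_surjective (hI : LinearIndependent ℝ (A.col ∘ I)) :
    Function.Surjective (lastColDet A I) := by
  obtain ⟨x, hx⟩ := exists_linearIndependent_snoc_of_lt_finrank hI (by simp)
  exact LinearMap.surjective fun h =>
    (lastColDet_ne_zero_iff A I x).2 hx (LinearMap.congr_fun h x)

lemma range_subset_range_of_lastColDet_preimage_eq (hA : InLinearGeneralPosition ℝ A.col)
    {J : Fin d → Fin n} (hI : Function.Injective I) (hJ : Function.Injective J) {s t : ℝ}
    (h : lastColDet A I ⁻¹' {s} = lastColDet A J ⁻¹' {t}) : Set.range I ⊆ Set.range J := by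
  have hI' : LinearIndependent ℝ (A.col ∘ I) := hA.linearIndependent_comp hI (by simp)
  have hJ' : LinearIndependent ℝ (A.col ∘ J) := hA.linearIndependent_comp hJ (by simp)
  have span_le : Submodule.span ℝ (Set.range (A.col ∘ I)) ≤
      Submodule.span ℝ (Set.range (A.col ∘ J)) := by
    rw [← ker_lastColDet hI', ← ker_lastColDet hJ']
    exact ker_le_ker_of_preimage_singleton_eq (lastColDet_surjective hI' s) h
  rintro _ ⟨k, rfl⟩
  refine hA.mem_of_mem_span_image ?_ ?_
  · calc (Set.range J).encard
      _ ≤ ENat.card (Fin d) := encard_range_le J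
      _ < Module.finrank ℝ (Fin (d + 1) → ℝ) := by
        rw [ENat.card_eq_coe_fintype_card, Fintype.card_fin, Module.finrank_fin_fun]
        exact_mod_cast d.lt_succ_self
  · rw [← Set.range_comp]
    exact span_le (Submodule.subset_span ⟨k, rfl⟩)

end LastColumn

theorem scaled_hyperplanes_distinct_general {d n : ℕ} {A : Matrix (Fin (d + 1)) (Fin n) ℝ}
    (hA : InLinearGeneralPosition ℝ A.col) {t₁ t₂ : ℝ} {I J : Fin d → Fin n}
    (hI : StrictMono I) (hJ : StrictMono J) (h : (t₁, I) ≠ (t₂, J)) :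
    ({x : Fin (d + 1) → ℝ | (colMat A I x).det = t₁} : Set (Fin (d + 1) → ℝ)) ≠
      {x : Fin (d + 1) → ℝ | (colMat A J x).det = t₂} := by
  intro hS
  simp only [← lastColDet_apply] at hS
  have range_eq : Set.range I = Set.range J :=
    (range_subset_range_of_lastColDet_preimage_eq hA hI.injective hJ.injective hS).antisymm
      (range_subset_range_of_lastColDet_preimage_eq hA hJ.injective hI.injective hS.symm)
  obtain rfl : I = J := (hI.range_inj hJ).1 range_eq
  obtain ⟨x, hx⟩ :=
    lastColDet_surjective (hA.linearIndependent_comp hI.injective (by simp)) t₁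
  have level_eq : t₁ = t₂ := hx.symm.trans (hS.subset hx)
  exact h (by rw [level_eq])

theorem scaled_hyperplanes_distinct (d n : ℕ) (hd : 1 ≤ d)
    (A : Matrix (Fin (d + 1)) (Fin n) ℝ) (hA : IsTotallyPositive A)
    (t₁ t₂ : ℝ) (ht₁ : 0 < t₁) (ht₂ : 0 < t₂)
    (I J : Fin d → Fin n) (hI : StrictMono I) (hJ : StrictMono J)
    (h : (t₁, I) ≠ (t₂, J)) :
    ({x : Fin (d + 1) → ℝ | (colMat A I x).det = t₁} : Set (Fin (d + 1) → ℝ)) ≠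
      {x : Fin (d + 1) → ℝ | (colMat A J x).det = t₂} :=
  scaled_hyperplanes_distinct_general hA.inLinearGeneralPosition_col hI hJ h
end
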